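/- For every integer n ≥ 2, Σ_{r=0}^{n-1} W_r = (W_n − W_{n-2} + W_{n+1} − W_{n-1})/(ab) − (A·α*·β² − B·β*·α² − ab·(A·α**·β − B·β**·α))/(ab)². -/

import Mathlib

noncomputable def w (a b w0 w1 : ℝ) : ℕ → ℝ
  | 0 => w0
  | 1 => w1
  | n + 2 => (if Even (n + 2) then a else b) * w a b w0 w1 (n + 1) + w a b w0 w1 n

/-- The standard basis `e_0 = 1, e_1 = i, e_2 = j, e_3 = k` of the real quaternions. -/
noncomputable def e : ℕ → Quaternion ℝ
  | 0 => 1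
  | 1 => ⟨0, 1, 0, 0⟩
  | 2 => ⟨0, 0, 1, 0⟩
  | _ => ⟨0, 0, 0, 1⟩

/-- The generalized bi-periodic Fibonacci quaternion `W_n = ∑_{l=0}^{3} w_{n+l} e_l`. -/
noncomputable def W (a b w0 w1 : ℝ) (n : ℕ) : Quaternion ℝ :=
  ∑ l ∈ Finset.range 4, w a b w0 w1 (n + l) • e l

/-- `qstar a b x = ∑_{l=0}^{3} (a^{ζ(l+1)}/(ab)^{⌊l/2⌋}) x^l e_l`; applied to `α`, `β`
it gives the quaternions `α*`, `β*`. -/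
noncomputable def qstar (a b x : ℝ) : Quaternion ℝ :=
  ∑ l ∈ Finset.range 4, (a ^ ((l + 1) % 2) / (a * b) ^ (l / 2) * x ^ l) • e l

/-- `qstarstar a b x = ∑_{l=0}^{3} (a^{ζ(l)}/(ab)^{⌊(l+1)/2⌋}) x^l e_l`; applied to `α`, `β`
it gives the quaternions `α**`, `β**`. -/
noncomputable def qstarstar (a b x : ℝ) : Quaternion ℝ :=
  ∑ l ∈ Finset.range 4, (a ^ (l % 2) / (a * b) ^ ((l + 1) / 2) * x ^ l) • e l

/-!
The even- and odd-indexed subsequences of `w` both satisfy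
`w (n + 4) - 2 * w (n + 2) + w n = a * b * w (n + 2)`, so the sum of the `W r` telescopes and only
a boundary term at the start remains to be computed. For this, note that a root `x` of
`x ^ 2 = a * b * (x + 1)` makes the solution with initial values `a, x` geometric on each parity
class, with ratio `x + 1`; its quaternions of index `0` and `1` are `qstar a b x` and
`x • qstarstar a b x`. Binet's formula writes `W` as a combination of these solutions for
`x = α` and `x = β`, and the boundary term can be read off.
-/

section BiperiodicFibonacci

variable (a b w0 w1 : ℝ)

theorem w_add_two_of_even {n : ℕ} (hn : Even n) :
    w a b w0 w1 (n + 2) = a * w a b w0 w1 (n + 1) + w a b w0 w1 n := by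
  rw [w, if_pos (hn.add even_two)]

theorem w_add_two_of_odd {n : ℕ} (hn : Odd n) :
    w a b w0 w1 (n + 2) = b * w a b w0 w1 (n + 1) + w a b w0 w1 n := by
  rw [w, if_neg (Nat.not_even_iff_odd.mpr (hn.add_even even_two))]

theorem w_add_four (n : ℕ) :
    w a b w0 w1 (n + 4) = (a * b + 2) * w a b w0 w1 (n + 2) - w a b w0 w1 n := by
  rcases n.even_or_odd with hn | hn
  · have h₂ := w_add_two_of_even a b w0 w1 hn
    have h₃ := w_add_two_of_odd a b w0 w1 hn.add_one
    have h₄ := w_add_two_of_even a b w0 w1 (hn.add even_two)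
    linear_combination h₄ + a * h₃ - h₂
  · have h₂ := w_add_two_of_odd a b w0 w1 hn
    have h₃ := w_add_two_of_even a b w0 w1 hn.add_one
    have h₄ := w_add_two_of_odd a b w0 w1 (hn.add_even even_two)
    linear_combination h₄ + b * h₃ - h₂

theorem W_add_four (n : ℕ) :
    W a b w0 w1 (n + 4) = (a * b + 2) • W a b w0 w1 (n + 2) - W a b w0 w1 n := by
  simp only [W, Nat.add_right_comm n _ _, w_add_four, sub_smul, mul_smul, Finset.sum_sub_distrib,
    Finset.smul_sum]

/-- The contribution of the lower end to the telescoping sum of the `W r`: the value of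
`(W₀ - W₋₂) + (W₁ - W₋₁)` when `W` is continued to negative indices by its recurrence, written
with nonnegative indices only. -/
noncomputable def boundaryTerm : Quaternion ℝ :=
  (W a b w0 w1 2 - (a * b + 1) • W a b w0 w1 0) + (W a b w0 w1 3 - (a * b + 1) • W a b w0 w1 1)

theorem smul_sum_range_W (n : ℕ) :
    (a * b) • ∑ r ∈ Finset.range (n + 2), W a b w0 w1 r =
      (W a b w0 w1 (n + 2) - W a b w0 w1 n + W a b w0 w1 (n + 3) - W a b w0 w1 (n + 1)) -
        boundaryTerm a b w0 w1 := by
  induction n with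
  | zero =>
    simp only [boundaryTerm, zero_add, Finset.sum_range_succ, Finset.range_zero, Finset.sum_empty]
    module
  | succ n ih =>
    rw [show n + 1 + 2 = n + 2 + 1 by rfl, Finset.sum_range_succ, smul_add, ih,
      show n + 1 + 3 = n + 4 by rfl, W_add_four]
    module

theorem w_linear_combination (p q u0 u1 v0 v1 : ℝ) (n : ℕ) :
    w a b (p * u0 + q * v0) (p * u1 + q * v1) n =
      p * w a b u0 u1 n + q * w a b v0 v1 n := by
  induction n using Nat.twoStepInduction with
  | zero => simp only [w]
  | one => simp only [w]
  | more n ih₀ ih₁ =>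
    simp only [w, ih₀, ih₁]
    ring

theorem W_linear_combination (p q u0 u1 v0 v1 : ℝ) (n : ℕ) :
    W a b (p * u0 + q * v0) (p * u1 + q * v1) n =
      p • W a b u0 u1 n + q • W a b v0 v1 n := by
  simp only [W, w_linear_combination, add_smul, mul_smul, Finset.sum_add_distrib, Finset.smul_sum]

variable {a b w0 w1}

section Root

variable {x : ℝ} (hx : x ^ 2 = a * b * (x + 1))
include hx

theorem w_add_two_of_root (n : ℕ) : w a b a x (n + 2) = (x + 1) * w a b a x n := by
  induction n using Nat.twoStepInduction with
  | zero =>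
    rw [w_add_two_of_even a b a x Even.zero]
    simp only [w]
    ring
  | one =>
    have h₂ : w a b a x 2 = a * x + a := w_add_two_of_even a b a x Even.zero
    have h₃ : w a b a x 3 = b * w a b a x 2 + x := w_add_two_of_odd a b a x odd_one
    change w a b a x 3 = (x + 1) * x
    linear_combination h₃ + b * h₂ - hx
  | more n ih₀ _ =>
    rw [w_add_four, ih₀]
    linear_combination -w a b a x n * hx

theorem w_eq_of_root (hab : a * b ≠ 0) (n : ℕ) :
    w a b a x n = a ^ ((n + 1) % 2) / (a * b) ^ (n / 2) * x ^ n := by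
  induction n using Nat.twoStepInduction with
  | zero => simp [w]
  | one => simp [w]
  | more n ih _ =>
    have hratio : x + 1 = x ^ 2 / (a * b) := by rw [eq_div_iff hab, hx, mul_comm]
    rw [w_add_two_of_root hx, ih, hratio, Nat.add_right_comm, Nat.add_mod_right,
      Nat.add_div_right n two_pos]
    ring

theorem W_zero_of_root (hab : a * b ≠ 0) : W a b a x 0 = qstar a b x := by
  simp only [W, qstar, zero_add, w_eq_of_root hx hab]

theorem W_one_of_root (hab : a * b ≠ 0) : W a b a x 1 = x • qstarstar a b x := by
  simp only [W, qstarstar, Finset.smul_sum, smul_smul]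
  refine Finset.sum_congr rfl fun l _ => ?_
  rw [w_eq_of_root hx hab, add_comm 1 l, add_assoc, Nat.add_mod_right]
  congr 1
  ring

theorem W_add_two_of_root (n : ℕ) : W a b a x (n + 2) = (x + 1) • W a b a x n := by
  simp only [W, Nat.add_right_comm n _ _, w_add_two_of_root hx, mul_smul, Finset.smul_sum]

end Root

theorem boundaryTerm_of_root {x y : ℝ} (hab : a * b ≠ 0) (hsum : x + y = a * b)
    (hprod : x * y = -(a * b)) :
    boundaryTerm a b a x = (a * b) • qstarstar a b x - y • qstar a b x := by
  have hx : x ^ 2 = a * b * (x + 1) := by linear_combination x * hsum - hprod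
  have hratio : x + 1 = (a * b + 1) - y := by linear_combination hsum
  have hsmul : (a * b) • qstarstar a b x = -(x * y) • qstarstar a b x := by rw [hprod, neg_neg]
  rw [boundaryTerm, W_add_two_of_root hx 0, W_add_two_of_root hx 1, W_zero_of_root hx hab,
    W_one_of_root hx hab, hratio, hsmul]
  module

theorem W_binet {α β A B : ℝ} (hab : a * b ≠ 0) (hprod : α * β = -(a * b)) (hne : α ≠ β)
    (hA : A = (α * w1 + b * w0) / (α - β)) (hB : B = (β * w1 + b * w0) / (α - β)) (n : ℕ) :
    W a b w0 w1 n = (A / α) • W a b a α n - (B / β) • W a b a β n := by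
  have hαβ : α * β ≠ 0 := hprod ▸ neg_ne_zero.mpr hab
  have hα : α ≠ 0 := left_ne_zero_of_mul hαβ
  have hβ : β ≠ 0 := right_ne_zero_of_mul hαβ
  have hd : α - β ≠ 0 := sub_ne_zero.mpr hne
  have h0 : A / α * a + -(B / β) * a = w0 := by
    rw [hA, hB]
    field_simp
    linear_combination (β - α) * w0 * hprod
  have h1 : A / α * α + -(B / β) * β = w1 := by
    rw [hA, hB]
    field_simp
    ring
  rw [sub_eq_add_neg, ← neg_smul, ← W_linear_combination, h0, h1]

theorem boundaryTerm_eq {α β A B : ℝ} (hab : a * b ≠ 0) (hsum : α + β = a * b)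
    (hprod : α * β = -(a * b)) (hne : α ≠ β)
    (hA : A = (α * w1 + b * w0) / (α - β)) (hB : B = (β * w1 + b * w0) / (α - β)) :
    boundaryTerm a b w0 w1 =
      (a * b)⁻¹ •
        ((A * β ^ 2) • qstar a b α - (B * α ^ 2) • qstar a b β -
          (a * b) • ((A * β) • qstarstar a b α - (B * α) • qstarstar a b β)) := by
  have hαβ : α * β ≠ 0 := hprod ▸ neg_ne_zero.mpr hab
  have hA' : A / α = -(a * b)⁻¹ * (A * β) := by
    rw [← inv_neg, ← hprod]
    field_simp [left_ne_zero_of_mul hαβ, right_ne_zero_of_mul hαβ]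
  have hB' : B / β = -(a * b)⁻¹ * (B * α) := by
    rw [← inv_neg, ← hprod]
    field_simp [left_ne_zero_of_mul hαβ, right_ne_zero_of_mul hαβ]
  have hbinet : boundaryTerm a b w0 w1 =
      (A / α) • boundaryTerm a b a α - (B / β) • boundaryTerm a b a β := by
    simp only [boundaryTerm, W_binet hab hprod hne hA hB]
    module
  rw [hbinet, boundaryTerm_of_root hab hsum hprod,
    boundaryTerm_of_root hab (add_comm α β ▸ hsum) (mul_comm α β ▸ hprod), hA', hB']
  module

end BiperiodicFibonacci

/-- Summation formula for the generalized bi-periodic Fibonacci quaternions. -/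
theorem stmt13 (a b w0 w1 α β A B : ℝ)
    (ha : a ≠ 0) (hb : b ≠ 0) (hD : a ^ 2 * b ^ 2 + 4 * (a * b) > 0)
    (hα : α = (a * b + Real.sqrt (a ^ 2 * b ^ 2 + 4 * (a * b))) / 2)
    (hβ : β = (a * b - Real.sqrt (a ^ 2 * b ^ 2 + 4 * (a * b))) / 2)
    (hA : A = (α * w1 + b * w0) / (α - β))
    (hB : B = (β * w1 + b * w0) / (α - β))
    (n : ℕ) (hn : 2 ≤ n) :
    ∑ r ∈ Finset.range n, W a b w0 w1 r =
      (a * b)⁻¹ •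
          (W a b w0 w1 n - W a b w0 w1 (n - 2) + W a b w0 w1 (n + 1) - W a b w0 w1 (n - 1)) -
        ((a * b) ^ 2)⁻¹ •
          ((A * β ^ 2) • qstar a b α - (B * α ^ 2) • qstar a b β -
            (a * b) • ((A * β) • qstarstar a b α - (B * α) • qstarstar a b β)) := by
  have hab : a * b ≠ 0 := mul_ne_zero ha hb
  have hsum : α + β = a * b := by rw [hα, hβ]; ring
  have hprod : α * β = -(a * b) := by
    rw [hα, hβ]
    linear_combination (-1 / 4) * Real.sq_sqrt hD.le
  have hne : α ≠ β := by
    rw [hα, hβ]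
    linarith [Real.sqrt_pos.mpr hD]
  obtain ⟨m, rfl⟩ := Nat.exists_eq_add_of_le' hn
  have hS := smul_sum_range_W a b w0 w1 m
  rw [boundaryTerm_eq hab hsum hprod hne hA hB, ← eq_inv_smul_iff₀ hab, smul_sub, smul_smul,
    ← mul_inv, ← sq] at hS
  exact hS
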